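/- For all Borel probability measures P and Q on ℝ^n and every real p ≥ 1, there exists a coupling γ of P and Q attaining the infimum defining the p-Wasserstein distance, i.e. (∫ ‖x − y‖₂^p dγ(x,y))^{1/p} = W_p(P, Q) (with both sides valued in [0, ∞]). -/

import Mathlib

open MeasureTheory
open scoped ENNReal

/-- The `p`-transport cost of a coupling `γ` on `ℝⁿ × ℝⁿ`:
`(∫ ‖x − y‖₂ᵖ dγ(x,y))^{1/p}`, valued in `[0, ∞]`. -/
noncomputable def transportCost {n : ℕ} (p : ℝ)
    (γ : Measure (EuclideanSpace ℝ (Fin n) × EuclideanSpace ℝ (Fin n))) : ℝ≥0∞ :=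
  (∫⁻ z, ENNReal.ofReal ‖z.1 - z.2‖ ^ p ∂γ) ^ (1 / p)

/-- The `p`-Wasserstein distance: infimum of the transport cost over all couplings
whose first marginal is `P` and second marginal is `Q`. -/
noncomputable def wassersteinDist {n : ℕ} (p : ℝ)
    (P Q : Measure (EuclideanSpace ℝ (Fin n))) : ℝ≥0∞ :=
  ⨅ (γ : Measure (EuclideanSpace ℝ (Fin n) × EuclideanSpace ℝ (Fin n)))
    (_ : γ.fst = P) (_ : γ.snd = Q), transportCost p γ

/-!
The direct method of the calculus of variations, for weak convergence of probability measures.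
Couplings of `P` and `Q` form a tight family, because each marginal is a tight measure, and the
marginal constraints are closed, so by Prokhorov's theorem the set of couplings is compact. The
integral of a lower semicontinuous cost is lower semicontinuous in the measure: by the layer cake
formula and Fatou's lemma this reduces to open sets, where it is the portmanteau theorem.
-/

open Set Filter Topology

section LowerSemicontinuity

theorem volume_setOfPred_pos_ofReal_lt (a : ℝ≥0∞) :
    volume {t : ℝ | 0 < t ∧ ENNReal.ofReal t < a} = a := by
  induction a with
  | top =>
    simp only [ENNReal.ofReal_lt_top, and_true]
    exact Real.volume_Ioi
  | coe a =>
    have hIoo : {t : ℝ | 0 < t ∧ ENNReal.ofReal t < a} = Ioo 0 (a : ℝ) := by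
      ext t
      exact and_congr_right fun ht => ENNReal.ofReal_lt_coe_iff ht.le
    rw [hIoo, Real.volume_Ioo, sub_zero, ENNReal.ofReal_coe_nnreal]

theorem lintegral_eq_lintegral_measure_ofReal_lt {Ω : Type*} [MeasurableSpace Ω] {μ : Measure Ω}
    [SFinite μ] {f : Ω → ℝ≥0∞} (hf : Measurable f) :
    ∫⁻ ω, f ω ∂μ = ∫⁻ t in Ioi (0 : ℝ), μ {ω | ENNReal.ofReal t < f ω} := by
  have hU : MeasurableSet {z : Ω × ℝ | ENNReal.ofReal z.2 < f z.1} :=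
    measurableSet_lt (by fun_prop) (by fun_prop)
  calc ∫⁻ ω, f ω ∂μ
      = ∫⁻ ω, volume.restrict (Ioi 0) {t | ENNReal.ofReal t < f ω} ∂μ := by
        refine lintegral_congr fun ω => ?_
        rw [Measure.restrict_apply' measurableSet_Ioi, inter_comm]
        exact (volume_setOfPred_pos_ofReal_lt (f ω)).symm
    _ = (μ.prod (volume.restrict (Ioi 0))) {z | ENNReal.ofReal z.2 < f z.1} :=
        (Measure.prod_apply hU).symm
    _ = ∫⁻ t in Ioi (0 : ℝ), μ {ω | ENNReal.ofReal t < f ω} := Measure.prod_apply_symm hU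

theorem lowerSemicontinuous_lintegral_probabilityMeasure {Ω : Type*} [MeasurableSpace Ω]
    [TopologicalSpace Ω] [TopologicalSpace.PseudoMetrizableSpace Ω]
    [TopologicalSpace.SeparableSpace Ω] [OpensMeasurableSpace Ω] {f : Ω → ℝ≥0∞}
    (hf : LowerSemicontinuous f) :
    LowerSemicontinuous fun μ : ProbabilityMeasure Ω => ∫⁻ ω, f ω ∂(μ : Measure Ω) := by
  rw [lowerSemicontinuous_iff_le_liminf]
  intro μ
  simp_rw [lintegral_eq_lintegral_measure_ofReal_lt hf.measurable]
  calc ∫⁻ t in Ioi (0 : ℝ), (μ : Measure Ω) {ω | ENNReal.ofReal t < f ω}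
      ≤ ∫⁻ t in Ioi (0 : ℝ),
          liminf (fun ν : ProbabilityMeasure Ω => (ν : Measure Ω) {ω | ENNReal.ofReal t < f ω})
            (𝓝 μ) :=
        lintegral_mono fun t =>
          ProbabilityMeasure.le_liminf_measure_open_of_tendsto tendsto_id
            (hf.isOpen_preimage (ENNReal.ofReal t))
    _ ≤ liminf (fun ν : ProbabilityMeasure Ω =>
          ∫⁻ t in Ioi (0 : ℝ), (ν : Measure Ω) {ω | ENNReal.ofReal t < f ω}) (𝓝 μ) :=
        lintegral_liminf_le fun ν => Antitone.measurable fun s t hst =>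
          measure_mono fun ω hω => (ENNReal.ofReal_le_ofReal hst).trans_lt hω

end LowerSemicontinuity

section Couplings

variable {X Y : Type*} [MeasurableSpace X] [MeasurableSpace Y]

/-- The set `Π(P, Q)` of couplings of `P` and `Q`. Its elements are bundled as
`ProbabilityMeasure`s so that it carries the topology of weak convergence; a measure whose first
marginal is a probability measure is itself one, so nothing is lost when `P` is. -/
def couplings (P : Measure X) (Q : Measure Y) : Set (ProbabilityMeasure (X × Y)) :=
  {γ | γ.toMeasure.fst = P ∧ γ.toMeasure.snd = Q}

theorem couplings_nonempty (P : Measure X) (Q : Measure Y) [IsProbabilityMeasure P]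
    [IsProbabilityMeasure Q] : (couplings P Q).Nonempty :=
  ⟨⟨P.prod Q, inferInstance⟩, Measure.fst_prod, Measure.snd_prod⟩

theorem exists_mem_couplings_toMeasure_eq {P : Measure X} {Q : Measure Y} [IsProbabilityMeasure P]
    {γ : Measure (X × Y)} (hP : γ.fst = P) (hQ : γ.snd = Q) :
    ∃ γ' ∈ couplings P Q, γ'.toMeasure = γ := by
  subst hP
  have : IsProbabilityMeasure (γ.map Prod.fst) := ‹IsProbabilityMeasure γ.fst›
  exact ⟨⟨γ, Measure.isProbabilityMeasure_of_map Prod.fst⟩, ⟨rfl, hQ⟩, rfl⟩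

variable [TopologicalSpace X] [TopologicalSpace Y]

theorem isClosed_couplings [HasOuterApproxClosed X] [BorelSpace X] [HasOuterApproxClosed Y]
    [BorelSpace Y] [OpensMeasurableSpace (X × Y)] (P : Measure X) (Q : Measure Y)
    [IsProbabilityMeasure P] [IsProbabilityMeasure Q] : IsClosed (couplings P Q) := by
  have hmarginals : couplings P Q =
      {γ | γ.map measurable_fst.aemeasurable = ⟨P, inferInstance⟩} ∩
        {γ | γ.map measurable_snd.aemeasurable = ⟨Q, inferInstance⟩} := by
    ext γ
    exact ⟨fun h => ⟨Subtype.ext h.1, Subtype.ext h.2⟩,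
      fun h => ⟨congrArg Subtype.val h.1, congrArg Subtype.val h.2⟩⟩
  rw [hmarginals]
  exact (isClosed_eq (ProbabilityMeasure.continuous_map continuous_fst) continuous_const).inter
    (isClosed_eq (ProbabilityMeasure.continuous_map continuous_snd) continuous_const)

theorem isTightMeasureSet_couplings {P : Measure X} {Q : Measure Y}
    (hP : IsTightMeasureSet {P}) (hQ : IsTightMeasureSet {Q}) :
    IsTightMeasureSet (ProbabilityMeasure.toMeasure '' couplings P Q) := by
  refine .prodMk (hP.subset ?_) (hQ.subset ?_)
  · rintro _ ⟨_, ⟨γ, hγ, rfl⟩, rfl⟩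
    exact hγ.1
  · rintro _ ⟨_, ⟨γ, hγ, rfl⟩, rfl⟩
    exact hγ.2

variable [PolishSpace X] [BorelSpace X] [PolishSpace Y] [BorelSpace Y]
  (P : Measure X) (Q : Measure Y) [IsProbabilityMeasure P] [IsProbabilityMeasure Q]

theorem isCompact_couplings : IsCompact (couplings P Q) := by
  have hcompact : IsCompact (closure (couplings P Q)) :=
    isCompact_closure_of_isTightMeasureSet
      (isTightMeasureSet_couplings isTightMeasureSet_singleton isTightMeasureSet_singleton)
  rwa [(isClosed_couplings P Q).closure_eq] at hcompact

theorem exists_isMinOn_lintegral_couplings {c : X × Y → ℝ≥0∞} (hc : LowerSemicontinuous c) :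
    ∃ γ ∈ couplings P Q,
      IsMinOn (fun γ : ProbabilityMeasure (X × Y) => ∫⁻ z, c z ∂(γ : Measure (X × Y)))
        (couplings P Q) γ :=
  ((lowerSemicontinuous_lintegral_probabilityMeasure hc).lowerSemicontinuousOn _).exists_isMinOn
    (couplings_nonempty P Q) (isCompact_couplings P Q)

theorem exists_optimal_coupling_general {c : X × Y → ℝ≥0∞} (hc : LowerSemicontinuous c) {p : ℝ}
    (hp : 0 < p) :
    ∃ γ : Measure (X × Y), γ.fst = P ∧ γ.snd = Q ∧
      (∫⁻ z, c z ^ p ∂γ) ^ (1 / p) =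
        ⨅ (γ' : Measure (X × Y)) (_ : γ'.fst = P) (_ : γ'.snd = Q),
          (∫⁻ z, c z ^ p ∂γ') ^ (1 / p) := by
  have hcp : LowerSemicontinuous fun z => c z ^ p :=
    ENNReal.continuous_rpow_const.comp_lowerSemicontinuous hc
      (ENNReal.monotone_rpow_of_nonneg hp.le)
  obtain ⟨γ, ⟨hγP, hγQ⟩, hmin⟩ := exists_isMinOn_lintegral_couplings P Q hcp
  refine ⟨γ, hγP, hγQ, le_antisymm ?_ (iInf₂_le_of_le _ hγP (iInf_le _ hγQ))⟩
  refine le_iInf fun γ' => le_iInf₂ fun hγ'P hγ'Q => ?_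
  obtain ⟨γ', hγ', rfl⟩ := exists_mem_couplings_toMeasure_eq hγ'P hγ'Q
  exact ENNReal.rpow_le_rpow (hmin hγ') (one_div_pos.2 hp).le

end Couplings

/-- For Borel probability measures `P`, `Q` on `ℝⁿ` and `p ≥ 1`, there exists an optimal
coupling attaining the infimum defining the `p`-Wasserstein distance. -/
theorem exists_optimal_coupling {n : ℕ}
    (P Q : Measure (EuclideanSpace ℝ (Fin n)))
    [IsProbabilityMeasure P] [IsProbabilityMeasure Q] (p : ℝ) (hp : 1 ≤ p) :
    ∃ γ : Measure (EuclideanSpace ℝ (Fin n) × EuclideanSpace ℝ (Fin n)),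
      γ.fst = P ∧ γ.snd = Q ∧ transportCost p γ = wassersteinDist p P Q :=
  exists_optimal_coupling_general P Q (c := fun z => ENNReal.ofReal ‖z.1 - z.2‖)
    (ENNReal.continuous_ofReal.comp (by fun_prop)).lowerSemicontinuous (zero_lt_one.trans_le hp)
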